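/- There is a constant C such that |τ_λ(g ∘ h) − τ_λ(g) − τ_λ(h)| ≤ C for all g, h ∈ Symp(D); that is, τ_λ : Symp(D) → ℝ is a quasi-morphism. -/

import Mathlib

open MeasureTheory Filter Topology Set Function Real

noncomputable section

/-- The closed unit disk in `ℝ²`. -/
def disk : Set (ℝ × ℝ) := {p | p.1 ^ 2 + p.2 ^ 2 ≤ 1}

/-- The boundary circle of the unit disk. -/
def bdry : Set (ℝ × ℝ) := {p | p.1 ^ 2 + p.2 ^ 2 = 1}

/-- Partial derivative in the `x`-direction. -/
def pdx (f : ℝ × ℝ → ℝ) (p : ℝ × ℝ) : ℝ := fderiv ℝ f p (1, 0)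

/-- Partial derivative in the `y`-direction. -/
def pdy (f : ℝ × ℝ → ℝ) (p : ℝ × ℝ) : ℝ := fderiv ℝ f p (0, 1)

/-- The Jacobian determinant of a map `ℝ² → ℝ²`. -/
def jacDet (g : ℝ × ℝ → ℝ × ℝ) (p : ℝ × ℝ) : ℝ :=
  pdx (fun q => (g q).1) p * pdy (fun q => (g q).2) p -
    pdy (fun q => (g q).1) p * pdx (fun q => (g q).2) p

/-- `g` represents an element of `Symp(D)`: a `C^∞` diffeomorphism of the closed
unit disk onto itself (smooth up to the boundary, i.e. the restriction of a
globally smooth map with globally smooth inverse on the disk) whose Jacobian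
determinant is identically `1` on the disk. -/
def IsSymp (g : ℝ × ℝ → ℝ × ℝ) : Prop :=
  ContDiff ℝ (⊤ : ℕ∞) g ∧ MapsTo g disk disk ∧ (∀ p ∈ disk, jacDet g p = 1) ∧
    ∃ g' : ℝ × ℝ → ℝ × ℝ, ContDiff ℝ (⊤ : ℕ∞) g' ∧ MapsTo g' disk disk ∧
      (∀ p ∈ disk, g' (g p) = p) ∧ (∀ p ∈ disk, g (g' p) = p)

/-- `g` represents an element of `G_o`: a symplectomorphism of the disk fixing the origin. -/
def IsSympO (g : ℝ × ℝ → ℝ × ℝ) : Prop :=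
  IsSymp g ∧ g (0, 0) = (0, 0)

/-- `τ_λ(g) = ∫_D g*λ ∧ λ` for `λ = (x dy - y dx)/2`, written out in coordinates. -/
def tauL (g : ℝ × ℝ → ℝ × ℝ) : ℝ :=
  (1 / 4) * ∫ p in disk,
    (p.1 * ((g p).1 * pdx (fun q => (g q).2) p - (g p).2 * pdx (fun q => (g q).1) p) +
     p.2 * ((g p).1 * pdy (fun q => (g q).2) p - (g p).2 * pdy (fun q => (g q).1) p))

/-- `σ(g) = ∫_γ (g*λ - λ)` along the radial path `γ(t) = (t,0)`, in coordinates. -/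
def sigmaQ (g : ℝ × ℝ → ℝ × ℝ) : ℝ :=
  (1 / 2) * ∫ t in (0:ℝ)..1,
    ((g (t, 0)).1 * pdx (fun q => (g q).2) (t, 0) -
      (g (t, 0)).2 * pdx (fun q => (g q).1) (t, 0))

/-- `G` is a smooth isotopy in `Symp(D)` starting at the identity. -/
def IsIsotopy (G : ℝ → ℝ × ℝ → ℝ × ℝ) : Prop :=
  ContDiff ℝ (⊤ : ℕ∞) (fun q : ℝ × (ℝ × ℝ) => G q.1 q.2) ∧
    (∀ t ∈ Icc (0:ℝ) 1, IsSymp (G t)) ∧ (∀ p ∈ disk, G 0 p = p)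

/-- `f` is a family of Hamiltonian functions for the isotopy `G`, i.e.
`i_{X_t} ω = d f_t` where `X_t = (∂g_t/∂t) ∘ g_t⁻¹`; since `g_t` maps the disk
onto itself this is expressed at the points `G t p`, `p ∈ D`. -/
def IsHam (G : ℝ → ℝ × ℝ → ℝ × ℝ) (f : ℝ → ℝ × ℝ → ℝ) : Prop :=
  ContDiff ℝ (⊤ : ℕ∞) (fun q : ℝ × (ℝ × ℝ) => f q.1 q.2) ∧
    ∀ t ∈ Icc (0:ℝ) 1, ∀ p ∈ disk,
      pdx (f t) (G t p) = -(deriv (fun s => G s p) t).2 ∧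
      pdy (f t) (G t p) = (deriv (fun s => G s p) t).1

/-- `φ` is the lift of the boundary isotopy of `G`, with `φ 0 = id`. -/
def IsBoundaryLift (G : ℝ → ℝ × ℝ → ℝ × ℝ) (φ : ℝ → ℝ → ℝ) : Prop :=
  ContDiff ℝ (⊤ : ℕ∞) (fun q : ℝ × ℝ => φ q.1 q.2) ∧
    (∀ t ∈ Icc (0:ℝ) 1, StrictMono (φ t) ∧ ∀ θ : ℝ, φ t (θ + 2 * π) = φ t θ + 2 * π) ∧
    (∀ θ : ℝ, φ 0 θ = θ) ∧
    (∀ t ∈ Icc (0:ℝ) 1, ∀ θ : ℝ,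
      G t (Real.cos θ, Real.sin θ) = (Real.cos (φ t θ), Real.sin (φ t θ)))

def pbk (g : ℝ × ℝ → ℝ × ℝ) (p : ℝ × ℝ) : ℝ × ℝ →L[ℝ] ℝ :=
  (1 / 2 : ℝ) • ((g p).1 • fderiv ℝ (fun q => (g q).2) p -
    (g p).2 • fderiv ℝ (fun q => (g q).1) p)

def wdg (a b : ℝ × ℝ →L[ℝ] ℝ) : ℝ := a (1, 0) * b (0, 1) - a (0, 1) * b (1, 0)

def alf (g : ℝ × ℝ → ℝ × ℝ) (p : ℝ × ℝ) : ℝ × ℝ →L[ℝ] ℝ := pbk g p - pbk id p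

lemma clm_apply_eq (L : ℝ × ℝ →L[ℝ] ℝ) (v : ℝ × ℝ) : L v = v.1 * L (1, 0) + v.2 * L (0, 1) := by
  conv_lhs => rw [show v = v.1 • ((1 : ℝ), (0 : ℝ)) + v.2 • ((0 : ℝ), (1 : ℝ)) by ext <;> simp]
  rw [map_add, map_smul, map_smul]; rfl

lemma clm_apply_eq2 (L : ℝ × ℝ →L[ℝ] ℝ × ℝ) (v : ℝ × ℝ) :
    L v = v.1 • L (1, 0) + v.2 • L (0, 1) := by
  conv_lhs => rw [show v = v.1 • ((1 : ℝ), (0 : ℝ)) + v.2 • ((0 : ℝ), (1 : ℝ)) by ext <;> simp]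
  rw [map_add, map_smul, map_smul]

lemma clm_det (L : ℝ × ℝ →L[ℝ] ℝ × ℝ) :
    L.det = (L (1, 0)).1 * (L (0, 1)).2 - (L (0, 1)).1 * (L (1, 0)).2 := by
  rw [ContinuousLinearMap.det, ← LinearMap.det_toMatrix (Module.Basis.finTwoProd ℝ),
    Matrix.det_fin_two]
  simp [LinearMap.toMatrix_apply]

lemma wdg_comp (a b : ℝ × ℝ →L[ℝ] ℝ) (L : ℝ × ℝ →L[ℝ] ℝ × ℝ) :
    wdg (a.comp L) (b.comp L) = L.det * wdg a b := by
  simp only [wdg, ContinuousLinearMap.comp_apply, clm_det]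
  rw [clm_apply_eq a (L (1, 0)), clm_apply_eq a (L (0, 1)), clm_apply_eq b (L (1, 0)),
    clm_apply_eq b (L (0, 1))]
  ring

lemma fd1 {g : ℝ × ℝ → ℝ × ℝ} {p : ℝ × ℝ} (hg : DifferentiableAt ℝ g p) (v : ℝ × ℝ) :
    fderiv ℝ (fun q => (g q).1) p v = (fderiv ℝ g p v).1 := by
  have := (hg.hasFDerivAt.fst).fderiv
  rw [this]; rfl

lemma fd2 {g : ℝ × ℝ → ℝ × ℝ} {p : ℝ × ℝ} (hg : DifferentiableAt ℝ g p) (v : ℝ × ℝ) :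
    fderiv ℝ (fun q => (g q).2) p v = (fderiv ℝ g p v).2 := by
  have := (hg.hasFDerivAt.snd).fderiv
  rw [this]; rfl

lemma pbk_apply {g : ℝ × ℝ → ℝ × ℝ} {p : ℝ × ℝ} (hg : DifferentiableAt ℝ g p) (v : ℝ × ℝ) :
    pbk g p v = (1 / 2) * ((g p).1 * (fderiv ℝ g p v).2 - (g p).2 * (fderiv ℝ g p v).1) := by
  simp [pbk, fd1 hg, fd2 hg]

lemma pbk_id_apply (p v : ℝ × ℝ) : pbk id p v = (1 / 2) * (p.1 * v.2 - p.2 * v.1) := by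
  rw [pbk_apply differentiableAt_id]; simp

lemma pbk_comp {g h : ℝ × ℝ → ℝ × ℝ} {p : ℝ × ℝ} (hg : DifferentiableAt ℝ g (h p))
    (hh : DifferentiableAt ℝ h p) : pbk (g ∘ h) p = (pbk g (h p)).comp (fderiv ℝ h p) := by
  refine ContinuousLinearMap.ext fun v => ?_
  rw [pbk_apply (hg.comp p hh), ContinuousLinearMap.comp_apply, pbk_apply hg, fderiv_comp p hg hh]
  rfl

lemma jacDet_eq {g : ℝ × ℝ → ℝ × ℝ} {p : ℝ × ℝ} (hg : DifferentiableAt ℝ g p) :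
    jacDet g p = (fderiv ℝ g p).det := by
  rw [clm_det, jacDet]; simp only [pdx, pdy, fd1 hg, fd2 hg]

lemma tauL_eq (g : ℝ × ℝ → ℝ × ℝ) : tauL g = ∫ p in disk, wdg (pbk g p) (pbk id p) := by
  rw [tauL, ← integral_const_mul]
  congr 1; ext p
  simp only [wdg, pbk_id_apply, pdx, pdy]
  simp [pbk]; ring

lemma two_le_inf : (1 + 1 : WithTop ℕ∞) ≤ ((⊤ : ℕ∞) : WithTop ℕ∞) := by
  rw [one_add_one_eq_two]
  change ((2 : ℕ∞) : WithTop ℕ∞) ≤ _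
  exact WithTop.coe_le_coe.2 le_top

lemma mem_disk {p : ℝ × ℝ} : p ∈ disk ↔ p.1 ^ 2 + p.2 ^ 2 ≤ 1 := Iff.rfl

lemma pbk_contDiff {g : ℝ × ℝ → ℝ × ℝ} (hg : ContDiff ℝ (⊤ : ℕ∞) g) :
    ContDiff ℝ 1 (pbk g) := by
  have h1 : ContDiff ℝ 1 (fun p => (g p).1) := (contDiff_fst.comp hg).of_le (by exact_mod_cast le_top)
  have h2 : ContDiff ℝ 1 (fun p => (g p).2) := (contDiff_snd.comp hg).of_le (by exact_mod_cast le_top)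
  have h3 : ContDiff ℝ 1 (fderiv ℝ (fun p => (g p).1)) :=
    (contDiff_fst.comp hg).fderiv_right two_le_inf
  have h4 : ContDiff ℝ 1 (fderiv ℝ (fun p => (g p).2)) :=
    (contDiff_snd.comp hg).fderiv_right two_le_inf
  exact ((h1.smul h4).sub (h2.smul h3)).const_smul (1 / 2 : ℝ)

lemma pbk_closed {g : ℝ × ℝ → ℝ × ℝ} (hg : ContDiff ℝ (⊤ : ℕ∞) g) (p a b : ℝ × ℝ) :
    fderiv ℝ (pbk g) p a b - fderiv ℝ (pbk g) p b a =
      jacDet g p * (a.1 * b.2 - a.2 * b.1) := by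
  have c1 : ContDiff ℝ (⊤ : ℕ∞) (fun p => (g p).1) := contDiff_fst.comp hg
  have c2 : ContDiff ℝ (⊤ : ℕ∞) (fun p => (g p).2) := contDiff_snd.comp hg
  have h1 := (c1.differentiable (by simp) p).hasFDerivAt
  have h2 := (c2.differentiable (by simp) p).hasFDerivAt
  have c3 : ContDiff ℝ 1 (fderiv ℝ (fun p => (g p).1)) := c1.fderiv_right two_le_inf
  have c4 : ContDiff ℝ 1 (fderiv ℝ (fun p => (g p).2)) := c2.fderiv_right two_le_inf
  have h3 := (c3.differentiable (by simp) p).hasFDerivAt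
  have h4 := (c4.differentiable (by simp) p).hasFDerivAt
  have key := ((h1.smul h4).sub (h2.smul h3)).const_smul (1 / 2 : ℝ)
  have s1 := (c1.contDiffAt (x := p)).isSymmSndFDerivAt (by rw [minSmoothness_of_isRCLikeNormedField, ← one_add_one_eq_two]; exact two_le_inf)
  have s2 := (c2.contDiffAt (x := p)).isSymmSndFDerivAt (by rw [minSmoothness_of_isRCLikeNormedField, ← one_add_one_eq_two]; exact two_le_inf)
  have e : fderiv ℝ (pbk g) p = _ := key.fderiv
  rw [e]
  have s1' := s1 a b
  have s2' := s2 a b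
  simp only [jacDet, pdx, pdy]
  simp
  rw [s1', s2']
  rw [clm_apply_eq (fderiv ℝ (fun p => (g p).1) p) a, clm_apply_eq (fderiv ℝ (fun p => (g p).1) p) b,
    clm_apply_eq (fderiv ℝ (fun p => (g p).2) p) a,
    clm_apply_eq (fderiv ℝ (fun p => (g p).2) p) b]
  ring

lemma alf_contDiff {g : ℝ × ℝ → ℝ × ℝ} (hg : ContDiff ℝ (⊤ : ℕ∞) g) :
    ContDiff ℝ 1 (alf g) := (pbk_contDiff hg).sub (pbk_contDiff contDiff_id)

lemma alf_closed {g : ℝ × ℝ → ℝ × ℝ} (hg : IsSymp g) {p : ℝ × ℝ} (hp : p ∈ disk) (a b : ℝ × ℝ) :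
    fderiv ℝ (alf g) p a b = fderiv ℝ (alf g) p b a := by
  have e : fderiv ℝ (alf g) p = fderiv ℝ (pbk g) p - fderiv ℝ (pbk id) p :=
    fderiv_sub ((pbk_contDiff hg.1).differentiable (by simp) p)
      ((pbk_contDiff contDiff_id).differentiable (by simp) p)
  have h1 := pbk_closed hg.1 p a b
  have h2 := pbk_closed contDiff_id p a b
  rw [hg.2.2.1 p hp] at h1
  rw [jacDet_eq differentiableAt_id, clm_det] at h2
  rw [e]
  simp at h1 h2 ⊢
  linarith

lemma disk_convex : Convex ℝ disk := by
  intro p hp q hq a b ha hb hab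
  simp only [mem_disk, Prod.fst_add, Prod.smul_fst, Prod.snd_add, Prod.smul_snd,
    smul_eq_mul] at *
  obtain rfl : b = 1 - a := by linarith
  nlinarith [mul_nonneg (mul_nonneg ha hb) (add_nonneg (sq_nonneg (p.1 - q.1)) (sq_nonneg (p.2 - q.2))),
    mul_nonneg ha (sub_nonneg.2 hp), mul_nonneg hb (sub_nonneg.2 hq)]

lemma disk_closed : IsClosed disk :=
  isClosed_le (by fun_prop) continuous_const

lemma disk_compact : IsCompact disk := by
  refine Metric.isCompact_of_isClosed_isBounded disk_closed ?_
  refine (Metric.isBounded_closedBall (x := (0 : ℝ × ℝ)) (r := 1)).subset fun p hp => ?_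
  rw [mem_disk] at hp
  rw [mem_closedBall_zero_iff, Prod.norm_def, max_le_iff]
  constructor <;> rw [Real.norm_eq_abs] <;> refine abs_le_of_sq_le_sq ?_ zero_le_one <;> nlinarith [sq_nonneg p.1, sq_nonneg p.2]

lemma disk_nhds {p : ℝ × ℝ} (hp : p.1 ^ 2 + p.2 ^ 2 < 1) : disk ∈ 𝓝 p := by
  have : IsOpen {p : ℝ × ℝ | p.1 ^ 2 + p.2 ^ 2 < 1} := isOpen_lt (by fun_prop) continuous_const
  exact mem_of_superset (this.mem_nhds hp) fun q hq => mem_disk.2 (le_of_lt hq)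

lemma exists_prim {g : ℝ × ℝ → ℝ × ℝ} (hg : IsSymp g) :
    ∃ F : ℝ × ℝ → ℝ, ∀ p ∈ disk, HasFDerivWithinAt F (alf g p) disk p := by
  refine disk_convex.exists_forall_hasFDerivWithinAt_of_hasFDerivWithinAt_symmetric
    (dω := fderiv ℝ (alf g)) ?_ ?_
  · intro x hx
    exact ((alf_contDiff hg.1).differentiable (by simp) x).hasFDerivAt.hasFDerivWithinAt
  · intro p hp a _ b _
    exact alf_closed hg hp a b

def Ppol (q : ℝ × ℝ) : ℝ × ℝ := (q.1 * cos q.2, q.1 * sin q.2)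
def Prad (q : ℝ × ℝ) : ℝ × ℝ := (cos q.2, sin q.2)
def Pang (q : ℝ × ℝ) : ℝ × ℝ := (-(q.1 * sin q.2), q.1 * cos q.2)

lemma Ppol_contDiff : ContDiff ℝ 1 Ppol := by unfold Ppol; fun_prop
lemma Prad_contDiff : ContDiff ℝ 1 Prad := by unfold Prad; fun_prop
lemma Pang_contDiff : ContDiff ℝ 1 Pang := by unfold Pang; fun_prop

lemma hasDerivAt_dir {E : Type*} [NormedAddCommGroup E] [NormedSpace ℝ E] {f : ℝ × ℝ → E}
    {q : ℝ × ℝ} (hf : DifferentiableAt ℝ f q) :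
    HasDerivAt (fun r => f (r, q.2)) (fderiv ℝ f q (1, 0)) q.1 ∧
    HasDerivAt (fun t => f (q.1, t)) (fderiv ℝ f q (0, 1)) q.2 := by
  constructor
  · have h : HasDerivAt (fun r : ℝ => (r, q.2)) ((1 : ℝ), (0 : ℝ)) q.1 :=
      (hasDerivAt_id _).prodMk (hasDerivAt_const _ _)
    exact HasFDerivAt.comp_hasDerivAt q.1 (f := fun r : ℝ => (r, q.2)) hf.hasFDerivAt h
  · have h : HasDerivAt (fun r : ℝ => (q.1, r)) ((0 : ℝ), (1 : ℝ)) q.2 :=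
      (hasDerivAt_const _ _).prodMk (hasDerivAt_id _)
    exact HasFDerivAt.comp_hasDerivAt q.2 (f := fun r : ℝ => (q.1, r)) hf.hasFDerivAt h

lemma fderiv_Ppol_r (q : ℝ × ℝ) : fderiv ℝ Ppol q (1, 0) = Prad q := by
  have h := (hasDerivAt_dir (Ppol_contDiff.differentiable (by simp) q)).1
  refine h.unique ?_
  have h1 := (hasDerivAt_id q.1).mul_const (cos q.2)
  have h2 := (hasDerivAt_id q.1).mul_const (sin q.2)
  simpa [Ppol, Prad] using h1.prodMk h2

lemma fderiv_Ppol_t (q : ℝ × ℝ) : fderiv ℝ Ppol q (0, 1) = Pang q := by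
  have h := (hasDerivAt_dir (Ppol_contDiff.differentiable (by simp) q)).2
  refine h.unique ?_
  have h1 := (hasDerivAt_cos q.2).const_mul q.1
  have h2 := (hasDerivAt_sin q.2).const_mul q.1
  simpa [Ppol, Pang] using h1.prodMk h2

lemma fderiv_Prad_t (q : ℝ × ℝ) : fderiv ℝ Prad q (0, 1) = (-sin q.2, cos q.2) := by
  have h := (hasDerivAt_dir (Prad_contDiff.differentiable (by simp) q)).2
  refine h.unique ?_
  simpa [Prad] using (hasDerivAt_cos q.2).prodMk (hasDerivAt_sin q.2)

lemma fderiv_Pang_r (q : ℝ × ℝ) : fderiv ℝ Pang q (1, 0) = (-sin q.2, cos q.2) := by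
  have h := (hasDerivAt_dir (Pang_contDiff.differentiable (by simp) q)).1
  refine h.unique ?_
  have h1 := ((hasDerivAt_id q.1).mul_const (sin q.2)).neg
  have h2 := (hasDerivAt_id q.1).mul_const (cos q.2)
  simpa [Pang] using h1.prodMk h2

lemma Ppol_sq (q : ℝ × ℝ) : (Ppol q).1 ^ 2 + (Ppol q).2 ^ 2 = q.1 ^ 2 := by
  simp only [Ppol]; nlinarith [sin_sq_add_cos_sq q.2]

lemma Ppol_mem {q : ℝ × ℝ} (h0 : 0 ≤ q.1) (h1 : q.1 ≤ 1) : Ppol q ∈ disk := by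
  rw [mem_disk, Ppol_sq]; nlinarith

lemma polar_disk (W : ℝ × ℝ → ℝ) (hW : Continuous W) :
    ∫ p in disk, W p = ∫ r in (0:ℝ)..1, ∫ t in (-π)..π, r * W (Ppol (r, t)) := by
  have hc : Continuous (fun q : ℝ × ℝ => q.1 * W (Ppol q)) := by
    have := Ppol_contDiff.continuous
    fun_prop
  rw [← integral_indicator disk_closed.measurableSet, ← integral_comp_polarCoord_symm]
  have e1 : ∫ p in polarCoord.target, p.1 • disk.indicator W (polarCoord.symm p) =
      ∫ p in polarCoord.target, ({q : ℝ × ℝ | q.1 ≤ 1}).indicator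
        (fun q : ℝ × ℝ => q.1 * W (Ppol q)) p := by
    refine setIntegral_congr_fun polarCoord.open_target.measurableSet ?_
    rintro ⟨r, t⟩ ⟨hr, ht⟩
    have hr : 0 < r := hr
    have hP : polarCoord.symm (r, t) = Ppol (r, t) := rfl
    simp only [hP]
    by_cases h : r ≤ 1
    · rw [indicator_of_mem (Ppol_mem hr.le h), indicator_of_mem (by exact h)]; rfl
    · rw [indicator_of_notMem, indicator_of_notMem (by exact h)]; · simp
      rw [mem_disk, Ppol_sq]; push Not at h ⊢; simp only; nlinarith
  rw [e1, setIntegral_indicator (isClosed_le continuous_fst continuous_const).measurableSet]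
  have e2 : polarCoord.target ∩ {q : ℝ × ℝ | q.1 ≤ 1} = Ioc 0 1 ×ˢ Ioo (-π) π := by
    ext ⟨r, t⟩
    change ((r ∈ Ioi 0 ∧ t ∈ Ioo (-π) π) ∧ r ≤ 1) ↔ (r ∈ Ioc 0 1 ∧ t ∈ Ioo (-π) π)
    simp only [mem_Ioi, mem_Ioc]; tauto
  rw [e2, Measure.volume_eq_prod, setIntegral_prod, intervalIntegral.integral_of_le zero_le_one]
  · refine setIntegral_congr_fun measurableSet_Ioc fun r _ => ?_
    simp only
    rw [intervalIntegral.integral_of_le (by linarith [pi_pos]), integral_Ioc_eq_integral_Ioo]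
  · rw [← Measure.volume_eq_prod]
    exact (hc.continuousOn.integrableOn_compact (isCompact_Icc.prod isCompact_Icc)).mono_set
      (prod_mono Ioc_subset_Icc_self Ioo_subset_Icc_self)

lemma fderiv_clm {β : ℝ × ℝ → ℝ × ℝ →L[ℝ] ℝ} (hβ : ContDiff ℝ 1 β) {V : ℝ × ℝ → ℝ × ℝ}
    (hV : ContDiff ℝ 1 V) (q v : ℝ × ℝ) :
    fderiv ℝ (fun q => β (Ppol q) (V q)) q v =
      fderiv ℝ β (Ppol q) (fderiv ℝ Ppol q v) (V q) + β (Ppol q) (fderiv ℝ V q v) := by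
  have h1 := (hβ.differentiable (by simp) (Ppol q)).hasFDerivAt
  have h2 := (Ppol_contDiff.differentiable (by simp) q).hasFDerivAt
  have h3 := (hV.differentiable (by simp) q).hasFDerivAt
  have h4 := (h1.comp q h2).clm_apply h3
  have : fderiv ℝ (fun q => β (Ppol q) (V q)) q = _ := h4.fderiv
  rw [this]
  simp [add_comm]

lemma stokes {A : ℝ × ℝ → ℝ} {α β : ℝ × ℝ → ℝ × ℝ →L[ℝ] ℝ}
    (hA : ∀ p ∈ disk, HasFDerivWithinAt A (α p) disk p) (hα : Continuous α)
    (hβ : ContDiff ℝ 1 β) (hcl : ∀ p ∈ disk, ∀ a b, fderiv ℝ β p a b = fderiv ℝ β p b a) :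
    ∫ p in disk, wdg (α p) (β p) =
      ∫ t in (-π)..π, A (cos t, sin t) * β (cos t, sin t) (-sin t, cos t) := by
  have hPc := Ppol_contDiff.continuous
  have hW : Continuous fun p => wdg (α p) (β p) := by
    have := hβ.continuous
    unfold wdg; fun_prop
  have hAc : ContinuousOn A disk := fun p hp => (hA p hp).continuousWithinAt
  have cbt : ContDiff ℝ 1 (fun q => β (Ppol q) (Pang q)) :=
    (hβ.comp Ppol_contDiff).clm_apply Pang_contDiff
  have cbr : ContDiff ℝ 1 (fun q => β (Ppol q) (Prad q)) :=
    (hβ.comp Ppol_contDiff).clm_apply Prad_contDiff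
  have hpi : -π ≤ π := by linarith [pi_pos]
  have hmaps : MapsTo Ppol (uIcc (0:ℝ) 1 ×ˢ uIcc (-π) π) disk := by
    rintro ⟨r, t⟩ ⟨hr, ht⟩
    rw [uIcc_of_le zero_le_one] at hr
    exact Ppol_mem hr.1 hr.2
  have hAP : ContinuousOn (fun q => A (Ppol q)) (uIcc (0:ℝ) 1 ×ˢ uIcc (-π) π) :=
    hAc.comp hPc.continuousOn hmaps
  have hdA : ∀ x ∈ Ioo (min 0 1) (max (0:ℝ) 1) ×ˢ Ioo (min (-π) π) (max (-π) π),
      HasFDerivAt (fun q => A (Ppol q)) ((α (Ppol x)).comp (fderiv ℝ Ppol x)) x := by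
    rintro ⟨r, t⟩ ⟨hr, ht⟩
    simp at hr
    have : (Ppol (r, t)).1 ^ 2 + (Ppol (r, t)).2 ^ 2 < 1 := by
      rw [Ppol_sq]; simp only; nlinarith [hr.1, hr.2]
    have h1 := (hA _ (mem_disk.2 this.le)).hasFDerivAt (disk_nhds this)
    exact h1.comp (r, t) (Ppol_contDiff.differentiable (by simp) _).hasFDerivAt
  let f : ℝ × ℝ → ℝ := fun q => A (Ppol q) * β (Ppol q) (Pang q)
  let g : ℝ × ℝ → ℝ := fun q => - (A (Ppol q) * β (Ppol q) (Prad q))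
  let f' : ℝ × ℝ → ℝ × ℝ →L[ℝ] ℝ := fun q =>
    A (Ppol q) • fderiv ℝ (fun q => β (Ppol q) (Pang q)) q +
      β (Ppol q) (Pang q) • (α (Ppol q)).comp (fderiv ℝ Ppol q)
  let g' : ℝ × ℝ → ℝ × ℝ →L[ℝ] ℝ := fun q =>
    -(A (Ppol q) • fderiv ℝ (fun q => β (Ppol q) (Prad q)) q +
      β (Ppol q) (Prad q) • (α (Ppol q)).comp (fderiv ℝ Ppol q))
  have key : ∀ q : ℝ × ℝ, Ppol q ∈ disk →
      f' q (1, 0) + g' q (0, 1) = q.1 * wdg (α (Ppol q)) (β (Ppol q)) := by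
    intro q hq
    have hdet := wdg_comp (α (Ppol q)) (β (Ppol q)) (fderiv ℝ Ppol q)
    have hd : (fderiv ℝ Ppol q).det = q.1 := by
      rw [clm_det, fderiv_Ppol_r, fderiv_Ppol_t]
      simp only [Prad, Pang]; linear_combination q.1 * sin_sq_add_cos_sq q.2
    rw [hd] at hdet
    rw [← hdet]
    simp only [f', g', _root_.add_apply, _root_.smul_apply,
      _root_.neg_apply, fderiv_clm hβ Pang_contDiff, fderiv_clm hβ Prad_contDiff,
      ContinuousLinearMap.comp_apply, fderiv_Ppol_r, fderiv_Ppol_t, fderiv_Prad_t, fderiv_Pang_r,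
      wdg, smul_eq_mul]
    rw [hcl _ hq (Pang q) (Prad q)]
    ring
  have G := integral2_divergence_prod_of_hasFDerivAt f g f' g' 0 (-π) 1 π
    (hAP.mul cbt.continuous.continuousOn) (hAP.mul cbr.continuous.continuousOn).neg
    (fun x hx => (hdA x hx).mul (cbt.differentiable (by simp) x).hasFDerivAt)
    (fun x hx => ((hdA x hx).mul (cbr.differentiable (by simp) x).hasFDerivAt).neg)
    (by
      have hc : Continuous (fun q : ℝ × ℝ => q.1 * wdg (α (Ppol q)) (β (Ppol q))) :=
        continuous_fst.mul (hW.comp hPc)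
      refine (hc.continuousOn.integrableOn_compact
        (isCompact_uIcc.prod isCompact_uIcc)).congr_fun (fun q hq => (key q (hmaps hq)).symm) ?_
      exact measurableSet_uIcc.prod measurableSet_uIcc)
  rw [polar_disk _ hW]
  have e1 : ∫ r in (0:ℝ)..1, ∫ t in (-π)..π, r * wdg (α (Ppol (r, t))) (β (Ppol (r, t))) =
      ∫ r in (0:ℝ)..1, ∫ t in (-π)..π, f' (r, t) (1, 0) + g' (r, t) (0, 1) := by
    refine intervalIntegral.integral_congr fun r hr => ?_
    refine intervalIntegral.integral_congr fun t ht => ?_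
    exact (key (r, t) (hmaps ⟨hr, ht⟩)).symm
  rw [e1, G]
  have e2 : ∀ x, g (x, π) = g (x, -π) := by
    intro x; simp [g, Ppol, Prad]
  have e3 : ∀ y, f (0, y) = 0 := by
    intro x; simp only [f, Pang]; simp [← Prod.zero_eq_mk]
  have e4 : ∀ y, f (1, y) = A (cos y, sin y) * β (cos y, sin y) (-sin y, cos y) := by
    intro x; simp [f, Ppol, Pang]
  simp [e2, e3, e4]

lemma hasFDerivAt_nsq {g : ℝ × ℝ → ℝ × ℝ} {p : ℝ × ℝ} (hg : DifferentiableAt ℝ g p) :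
    ∃ L : ℝ × ℝ →L[ℝ] ℝ, HasFDerivAt (fun q => (g q).1 ^ 2 + (g q).2 ^ 2) L p ∧
      ∀ v, L v = 2 * ((g p).1 * (fderiv ℝ g p v).1 + (g p).2 * (fderiv ℝ g p v).2) := by
  have h1 := hg.hasFDerivAt.fst
  have h2 := hg.hasFDerivAt.snd
  refine ⟨_, (h1.pow 2).add (h2.pow 2), fun v => ?_⟩
  simp; ring

lemma bd_maps {g : ℝ × ℝ → ℝ × ℝ} (hg : IsSymp g) {p : ℝ × ℝ} (hp : p.1 ^ 2 + p.2 ^ 2 = 1) :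
    (g p).1 ^ 2 + (g p).2 ^ 2 = 1 := by
  obtain ⟨hgs, hgm, -, k, hks, hkm, hkg, hgk⟩ := hg
  have hpd : p ∈ disk := mem_disk.2 hp.le
  by_contra hne
  have hlt : (g p).1 ^ 2 + (g p).2 ^ 2 < 1 := lt_of_le_of_ne (mem_disk.1 (hgm hpd)) hne
  have hnh := disk_nhds hlt
  have hkp : k (g p) = p := hkg p hpd
  have dk : DifferentiableAt ℝ k (g p) := hks.differentiable (by simp) _
  have dg : DifferentiableAt ℝ g (k (g p)) := hgs.differentiable (by simp) _
  obtain ⟨L, hL, hLv⟩ := hasFDerivAt_nsq dk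
  have hmax : IsLocalMax (fun q => (k q).1 ^ 2 + (k q).2 ^ 2) (g p) := by
    filter_upwards [hnh] with q hq
    simp only [hkp, hp]
    exact mem_disk.1 (hkm hq)
  have hL0 : L = 0 := hmax.hasFDerivAt_eq_zero hL
  have hid : HasFDerivAt (g ∘ k) (ContinuousLinearMap.id ℝ (ℝ × ℝ)) (g p) := by
    refine (hasFDerivAt_id (g p)).congr_of_eventuallyEq ?_
    filter_upwards [hnh] with q hq
    exact hgk q hq
  have hcomp := (dg.hasFDerivAt.comp (g p) dk.hasFDerivAt).unique hid
  have hinj : Function.Injective (fderiv ℝ k (g p) : ℝ × ℝ →ₗ[ℝ] ℝ × ℝ) := by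
    intro a b hab
    have ha := DFunLike.congr_fun hcomp a
    have hb := DFunLike.congr_fun hcomp b
    have hab' : fderiv ℝ k (g p) a = fderiv ℝ k (g p) b := hab
    simp only [ContinuousLinearMap.comp_apply, ContinuousLinearMap.id_apply] at ha hb
    rw [← ha, ← hb, hab']
  obtain ⟨v, hv⟩ := LinearMap.injective_iff_surjective.1 hinj p
  have hv' : fderiv ℝ k (g p) v = p := hv
  have := hLv v
  rw [hL0, hkp, hv'] at this
  simp at this
  nlinarith

lemma pbk_nonneg {g : ℝ × ℝ → ℝ × ℝ} (hg : IsSymp g) (t : ℝ) :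
    0 ≤ pbk g (cos t, sin t) (-sin t, cos t) := by
  have hp : ∀ s, (cos s) ^ 2 + (sin s) ^ 2 = 1 := fun s => by
    rw [add_comm]; exact sin_sq_add_cos_sq s
  have hb : ∀ s : ℝ, (g (cos s, sin s)).1 ^ 2 + (g (cos s, sin s)).2 ^ 2 = 1 :=
    fun s => bd_maps hg (hp s)
  have hpd : (cos t, sin t) ∈ disk := mem_disk.2 (hp t).le
  have dg : DifferentiableAt ℝ g (cos t, sin t) := hg.1.differentiable (by simp) _
  obtain ⟨L, hL, hLv⟩ := hasFDerivAt_nsq dg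
  have htan : L (-sin t, cos t) = 0 := by
    have hc : HasDerivAt (fun s : ℝ => (cos s, sin s)) (-sin t, cos t) t :=
      (hasDerivAt_cos t).prodMk (hasDerivAt_sin t)
    have h1 := HasFDerivAt.comp_hasDerivAt t (f := fun s : ℝ => (cos s, sin s)) hL hc
    refine h1.unique ?_
    have : ((fun q => (g q).1 ^ 2 + (g q).2 ^ 2) ∘ fun s : ℝ => (cos s, sin s)) = fun _ => 1 :=
      funext hb
    rw [this]
    exact hasDerivAt_const _ _
  have hrad : L (-(cos t, sin t)) ≤ 0 := by
    have hmax : IsLocalMaxOn (fun q => (g q).1 ^ 2 + (g q).2 ^ 2) disk (cos t, sin t) := by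
      refine IsMaxOn.localize fun q hq => ?_
      change (g q).1 ^ 2 + (g q).2 ^ 2 ≤ _
      rw [hb t]
      exact mem_disk.1 (hg.2.1 hq)
    refine hmax.hasFDerivWithinAt_nonpos hL.hasFDerivWithinAt ?_
    refine mem_posTangentConeAt_of_segment_subset ?_
    rw [add_neg_cancel]
    exact disk_convex.segment_subset hpd (mem_disk.2 (by simp))
  have hdet := hg.2.2.1 _ hpd
  rw [jacDet_eq dg, clm_det] at hdet
  rw [map_neg, hLv] at hrad
  rw [hLv] at htan
  rw [pbk_apply dg]
  have e1 := clm_apply_eq2 (fderiv ℝ g (cos t, sin t)) (-sin t, cos t)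
  have e2 := clm_apply_eq2 (fderiv ℝ g (cos t, sin t)) (cos t, sin t)
  have e11 := congrArg Prod.fst e1
  have e12 := congrArg Prod.snd e1
  have e21 := congrArg Prod.fst e2
  have e22 := congrArg Prod.snd e2
  simp only [Prod.fst_add, Prod.smul_fst, Prod.snd_add, Prod.smul_snd, smul_eq_mul] at e11 e12 e21 e22
  have hpt := hp t
  have hbt := hb t
  have hd2 : (fderiv ℝ g (cos t, sin t) (cos t, sin t)).1 *
      (fderiv ℝ g (cos t, sin t) (-sin t, cos t)).2 -
      (fderiv ℝ g (cos t, sin t) (cos t, sin t)).2 *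
      (fderiv ℝ g (cos t, sin t) (-sin t, cos t)).1 = 1 := by
    rw [e11, e12, e21, e22]
    linear_combination hdet + ((fderiv ℝ g (cos t, sin t) (1, 0)).1 * (fderiv ℝ g (cos t, sin t) (0, 1)).2 -
      (fderiv ℝ g (cos t, sin t) (0, 1)).1 * (fderiv ℝ g (cos t, sin t) (1, 0)).2) * hpt
  clear e1 e2 e11 e12 e21 e22 hdet
  generalize (fderiv ℝ g (cos t, sin t) (cos t, sin t)).1 = c at *
  generalize (fderiv ℝ g (cos t, sin t) (cos t, sin t)).2 = d at *
  generalize (fderiv ℝ g (cos t, sin t) (-sin t, cos t)).1 = a at *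
  generalize (fderiv ℝ g (cos t, sin t) (-sin t, cos t)).2 = b at *
  generalize (g (cos t, sin t)).1 = u at *
  generalize (g (cos t, sin t)).2 = v at *
  have hn : 0 ≤ u * c + v * d := by linarith
  have hns : (u * c + v * d) * (u * b - v * a) = 1 := by
    linear_combination (u * d - v * c) / 2 * htan + hbt * (c * b - d * a) + hd2
  by_contra hneg
  push Not at hneg
  nlinarith

def wbd (g : ℝ × ℝ → ℝ × ℝ) (t : ℝ) : ℝ := alf g (cos t, sin t) (-sin t, cos t)

lemma wbd_cont {g : ℝ × ℝ → ℝ × ℝ} (hg : IsSymp g) : Continuous (wbd g) := by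
  have := (alf_contDiff hg.1).continuous
  unfold wbd; fun_prop

lemma circ_mem (t : ℝ) : (cos t, sin t) ∈ disk := mem_disk.2 (by simp)

lemma wbd_lower {g : ℝ × ℝ → ℝ × ℝ} (hg : IsSymp g) (t : ℝ) : |wbd g t| ≤ wbd g t + 1 := by
  have h := pbk_nonneg hg t
  have : wbd g t = pbk g (cos t, sin t) (-sin t, cos t) - 1 / 2 := by
    simp only [wbd, alf, _root_.sub_apply, pbk_id_apply]
    nlinarith [sin_sq_add_cos_sq t]
  rw [abs_le]; constructor <;> linarith

lemma prim_deriv {g : ℝ × ℝ → ℝ × ℝ} {F : ℝ × ℝ → ℝ}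
    (hF : ∀ p ∈ disk, HasFDerivWithinAt F (alf g p) disk p) (t : ℝ) :
    HasDerivAt (fun s => F (cos s, sin s)) (wbd g t) t := by
  have hc : HasDerivAt (fun s : ℝ => (cos s, sin s)) (-sin t, cos t) t :=
    (hasDerivAt_cos t).prodMk (hasDerivAt_sin t)
  have := (hF _ (circ_mem t)).comp_hasDerivWithinAt t (f := fun s : ℝ => (cos s, sin s))
    (s := univ) hc.hasDerivWithinAt (fun s _ => circ_mem s)
  rw [hasDerivWithinAt_univ] at this
  exact this

lemma prim_int {g : ℝ × ℝ → ℝ × ℝ} {F : ℝ × ℝ → ℝ} (hg : IsSymp g)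
    (hF : ∀ p ∈ disk, HasFDerivWithinAt F (alf g p) disk p) (a b : ℝ) :
    ∫ t in a..b, wbd g t = F (cos b, sin b) - F (cos a, sin a) :=
  intervalIntegral.integral_eq_sub_of_hasDerivAt (f := fun s => F (cos s, sin s))
    (fun t _ => prim_deriv hF t) ((wbd_cont hg).intervalIntegrable _ _)

lemma wbd_zero {g : ℝ × ℝ → ℝ × ℝ} (hg : IsSymp g) : ∫ t in (-π)..π, wbd g t = 0 := by
  obtain ⟨F, hF⟩ := exists_prim hg
  rw [prim_int hg hF]; simp

lemma wbd_abs {g : ℝ × ℝ → ℝ × ℝ} (hg : IsSymp g) : ∫ t in (-π)..π, |wbd g t| ≤ 2 * π := by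
  have hc := wbd_cont hg
  have h : ∫ t in (-π)..π, |wbd g t| ≤ ∫ t in (-π)..π, (wbd g t + 1) :=
    intervalIntegral.integral_mono_on (by linarith [pi_pos]) (hc.abs.intervalIntegrable _ _)
      ((hc.add continuous_const).intervalIntegrable _ _) fun t _ => wbd_lower hg t
  rw [intervalIntegral.integral_add (hc.intervalIntegrable _ _)
    (continuous_const.intervalIntegrable _ _), wbd_zero hg] at h
  simp at h
  linarith

lemma prim_osc {g : ℝ × ℝ → ℝ × ℝ} {F : ℝ × ℝ → ℝ} (hg : IsSymp g)
    (hF : ∀ p ∈ disk, HasFDerivWithinAt F (alf g p) disk p) {p : ℝ × ℝ}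
    (hp : p.1 ^ 2 + p.2 ^ 2 = 1) : |F p - F (cos (-π), sin (-π))| ≤ 2 * π := by
  obtain ⟨a, ha, rfl⟩ : ∃ a ∈ Ioc (-π) π, (cos a, sin a) = p := by
    have hz : ‖(⟨p.1, p.2⟩ : ℂ)‖ = 1 := by
      rw [Complex.norm_def, Complex.normSq_mk, ← sq, ← sq, hp, Real.sqrt_one]
    have hz0 : (⟨p.1, p.2⟩ : ℂ) ≠ 0 := by
      intro h; rw [h] at hz; simp at hz
    refine ⟨Complex.arg ⟨p.1, p.2⟩, Complex.arg_mem_Ioc _, ?_⟩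
    rw [Complex.cos_arg hz0, Complex.sin_arg, hz]; simp
  have hc := wbd_cont hg
  rw [← prim_int hg hF]
  calc |∫ t in (-π)..a, wbd g t| ≤ ∫ t in (-π)..a, |wbd g t| :=
        intervalIntegral.abs_integral_le_integral_abs ha.1.le
    _ ≤ ∫ t in (-π)..π, |wbd g t| :=
        intervalIntegral.integral_mono_interval le_rfl ha.1.le ha.2
          (Eventually.of_forall fun t => abs_nonneg _) (hc.abs.intervalIntegrable _ _)
    _ ≤ 2 * π := wbd_abs hg

lemma tau_defect {g h : ℝ × ℝ → ℝ × ℝ} (hg : IsSymp g) (hh : IsSymp h) :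
    tauL (g ∘ h) - tauL g - tauL h =
      - ∫ p in disk, wdg ((alf g (h p)).comp (fderiv ℝ h p)) (alf h p) := by
  have hgd : Differentiable ℝ g := hg.1.differentiable (by simp)
  have hhd : Differentiable ℝ h := hh.1.differentiable (by simp)
  have hcomp : ∀ p, (alf g (h p)).comp (fderiv ℝ h p) = pbk (g ∘ h) p - pbk h p := by
    intro p
    rw [alf, ContinuousLinearMap.sub_comp, ← pbk_comp (hgd _) (hhd _),
      ← pbk_comp differentiableAt_id (hhd _)]
    rfl
  have himg : h '' disk = disk := by
    obtain ⟨-, hm, -, k, -, hkm, hkh, hhk⟩ := hh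
    exact Subset.antisymm hm.image_subset fun q hq => ⟨k q, hkm hq, hhk q hq⟩
  have hinj : InjOn h disk := by
    obtain ⟨-, hm, -, k, -, hkm, hkh, hhk⟩ := hh
    intro a ha b hb hab
    rw [← hkh a ha, ← hkh b hb, hab]
  have htg : tauL g = ∫ p in disk, wdg (pbk (g ∘ h) p - pbk h p) (pbk h p) := by
    have h1 : tauL g = ∫ p in disk, wdg (alf g p) (pbk id p) := by
      rw [tauL_eq]
      congr 1; ext p
      simp only [wdg, alf, _root_.sub_apply]; ring
    have h2 := integral_image_eq_integral_abs_det_fderiv_smul volume disk_closed.measurableSet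
      (fun x _ => (hhd x).hasFDerivAt.hasFDerivWithinAt) hinj
      (fun p => wdg (alf g p) (pbk id p))
    rw [himg] at h2
    rw [h1, h2]
    refine setIntegral_congr_fun disk_closed.measurableSet fun p hp => ?_
    rw [← hcomp, show pbk h p = (pbk id (h p)).comp (fderiv ℝ h p) from
      pbk_comp (g := id) differentiableAt_id (hhd p), wdg_comp, ← jacDet_eq (hhd p), hh.2.2.1 p hp]
    simp
  have hgh := (pbk_contDiff (hg.1.comp hh.1)).continuous
  have hhc := (pbk_contDiff hh.1).continuous
  have hic := (pbk_contDiff (g := id) contDiff_id).continuous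
  have hI : ∀ a b : ℝ × ℝ → ℝ × ℝ →L[ℝ] ℝ, Continuous a → Continuous b →
      IntegrableOn (fun p => wdg (a p) (b p)) disk := by
    intro a b ha hb
    refine ContinuousOn.integrableOn_compact disk_compact (Continuous.continuousOn ?_)
    unfold wdg; fun_prop
  have hsc : Continuous fun p => pbk (g ∘ h) p - pbk h p := hgh.sub hhc
  have i3 : IntegrableOn (fun p => wdg (pbk (g ∘ h) p) (pbk id p) -
      wdg (pbk (g ∘ h) p - pbk h p) (pbk h p)) disk := (hI _ _ hgh hic).sub (hI _ _ hsc hhc)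
  rw [htg, tauL_eq, tauL_eq, ← integral_sub (hI _ _ hgh hic) (hI _ _ hsc hhc),
    ← integral_sub i3 (hI _ _ hhc hic),
    ← integral_neg]
  congr 1; ext p
  rw [hcomp]
  simp only [wdg, alf, _root_.sub_apply]; ring

/-- `τ_λ : Symp(D) → ℝ` is a quasi-morphism: there is a constant
`C` with `|τ_λ(g ∘ h) - τ_λ(g) - τ_λ(h)| ≤ C` for all `g, h ∈ Symp(D)`. -/
theorem tauL_quasimorphism :
    ∃ C : ℝ, ∀ g h : ℝ × ℝ → ℝ × ℝ, IsSymp g → IsSymp h →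
      |tauL (g ∘ h) - tauL g - tauL h| ≤ C := by
  refine ⟨2 * π * (2 * π), fun g h hg hh => ?_⟩
  obtain ⟨F, hF⟩ := exists_prim hg
  have hhd : Differentiable ℝ h := hh.1.differentiable (by simp)
  have hA : ∀ p ∈ disk, HasFDerivWithinAt (fun p => F (h p))
      ((alf g (h p)).comp (fderiv ℝ h p)) disk p := fun p hp =>
    (hF _ (hh.2.1 hp)).comp p (hhd p).hasFDerivAt.hasFDerivWithinAt hh.2.1
  have hα : Continuous fun p => (alf g (h p)).comp (fderiv ℝ h p) :=
    ((alf_contDiff hg.1).continuous.comp hh.1.continuous).clm_comp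
      (hh.1.continuous_fderiv (by simp))
  rw [tau_defect hg hh, abs_neg,
    stokes hA hα (alf_contDiff hh.1) (fun p hp a b => alf_closed hh hp a b)]
  change |∫ t in (-π)..π, F (h (cos t, sin t)) * wbd h t| ≤ _
  have hAc : Continuous fun t : ℝ => F (h (cos t, sin t)) := by
    have h1 : ContinuousOn (fun p => F (h p)) disk := fun p hp => (hA p hp).continuousWithinAt
    exact h1.comp_continuous (f := fun t : ℝ => (cos t, sin t)) (by fun_prop) circ_mem
  have hwc := wbd_cont hh
  set K := F (cos (-π), sin (-π)) with hK
  have hpi : -π ≤ π := by linarith [pi_pos]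
  have e : ∫ t in (-π)..π, F (h (cos t, sin t)) * wbd h t =
      ∫ t in (-π)..π, (F (h (cos t, sin t)) - K) * wbd h t := by
    simp only [sub_mul]
    have i1 : IntervalIntegrable (fun t => F (h (cos t, sin t)) * wbd h t) volume (-π) π :=
      (hAc.mul hwc).intervalIntegrable _ _
    have i2 : IntervalIntegrable (fun t => K * wbd h t) volume (-π) π :=
      (continuous_const.mul hwc).intervalIntegrable _ _
    rw [intervalIntegral.integral_sub i1 i2, intervalIntegral.integral_const_mul,
      wbd_zero hh]
    simp
  rw [e]
  calc |∫ t in (-π)..π, (F (h (cos t, sin t)) - K) * wbd h t|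
      ≤ ∫ t in (-π)..π, |(F (h (cos t, sin t)) - K) * wbd h t| :=
        intervalIntegral.abs_integral_le_integral_abs hpi
    _ ≤ ∫ t in (-π)..π, 2 * π * |wbd h t| := by
        refine intervalIntegral.integral_mono_on hpi
          (((hAc.sub continuous_const).mul hwc).abs.intervalIntegrable _ _)
          ((continuous_const.mul hwc.abs).intervalIntegrable _ _) fun t _ => ?_
        rw [abs_mul]
        refine mul_le_mul_of_nonneg_right (prim_osc hg hF (bd_maps hh ?_)) (abs_nonneg _)
        simp
    _ = 2 * π * ∫ t in (-π)..π, |wbd h t| := intervalIntegral.integral_const_mul _ _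
    _ ≤ 2 * π * (2 * π) :=
        mul_le_mul_of_nonneg_left (wbd_abs hh) (by linarith [pi_pos])
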